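/- Equality holds in the refined Green–Osher inequality ∫_γ (1/k) ds = (2/π)(L² − 4πA) + 2A if and only if the support function of γ has the form u(θ) = a₀ + a₁ cos θ + b₁ sin θ + a₂ cos 2θ + b₂ sin 2θ for constants with a₀ − 3a₂ cos 2θ − 3b₂ sin 2θ > 0 for all θ. -/

import Mathlib

open Real MeasureTheory intervalIntegral Set Filter

lemma co_deriv (f f' : ℝ → ℂ) (hf : ∀ x, HasDerivAt f (f' x) x) (hc : Continuous f')
    (h : f (2 * π) = f 0) (n : ℤ) :
    fourierCoeffOn two_pi_pos f' n = Complex.I * n * fourierCoeffOn two_pi_pos f n := by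
  have hpi : (π : ℂ) ≠ 0 := by exact_mod_cast Real.pi_ne_zero
  by_cases hn : n = 0
  · subst hn
    rw [fourierCoeffOn_eq_integral]
    have : ∫ x in (0:ℝ)..(2 * π), f' x = 0 := by
      rw [integral_eq_sub_of_hasDerivAt (fun x _ => hf x) (hc.intervalIntegrable _ _), h, sub_self]
    simp [this]
  · have h1 := fourierCoeffOn_of_hasDerivAt two_pi_pos hn (fun x _ => hf x)
      (hc.intervalIntegrable _ _)
    rw [h1, h]
    have hn' : (n : ℂ) ≠ 0 := by exact_mod_cast hn
    push_cast
    field_simp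
    simp
    ring

lemma parseval (f : ℝ → ℝ) (hf : Continuous f) :
    HasSum (fun n : ℤ => ‖fourierCoeffOn two_pi_pos (fun x => (f x : ℂ)) n‖ ^ 2)
      ((2 * π)⁻¹ * ∫ x in (0:ℝ)..(2 * π), f x ^ 2) := by
  have hm : MemLp (fun x => (f x : ℂ)) 2 (volume.restrict (Ioc 0 (2 * π))) := by
    have hc : Continuous (fun x => (f x : ℂ)) := by fun_prop
    refine (memLp_two_iff_integrable_sq_norm hc.aestronglyMeasurable).2 ?_
    exact (by fun_prop : Continuous fun x => ‖(f x : ℂ)‖ ^ 2).integrableOn_Ioc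
  have := hasSum_sq_fourierCoeffOn two_pi_pos hm
  simpa using this

lemma key_sum (u u1 u2 : ℝ → ℝ) (h1 : ∀ x, HasDerivAt u (u1 x) x)
    (h2 : ∀ x, HasDerivAt u1 (u2 x) x) (hc : Continuous u2)
    (p0 : u (2 * π) = u 0) (p1 : u1 (2 * π) = u1 0) :
    HasSum (fun n : ℤ => (((n : ℝ) ^ 2 - 1) * ((n : ℝ) ^ 2 - 4)) *
        ‖fourierCoeffOn two_pi_pos (fun x => (u x : ℂ)) n‖ ^ 2)
      ((2 * π)⁻¹ * ∫ x in (0:ℝ)..(2 * π), (u2 x + u x) * (u2 x + 4 * u x)) := by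
  have cu : Continuous u := continuous_iff_continuousAt.2 fun x => (h1 x).continuousAt
  have cu1 : Continuous u1 := continuous_iff_continuousAt.2 fun x => (h2 x).continuousAt
  have hH := parseval (fun x => u2 x + 5 / 2 * u x) (by fun_prop)
  have hu := (parseval u cu).mul_left (9 / 4)
  have hs := hH.sub hu
  have hcoef : ∀ n : ℤ, fourierCoeffOn two_pi_pos (fun x => ((u2 x + 5 / 2 * u x : ℝ) : ℂ)) n
      = ((5 / 2 - (n : ℝ) ^ 2 : ℝ) : ℂ) * fourierCoeffOn two_pi_pos (fun x => (u x : ℂ)) n := by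
    intro n
    have e1 := co_deriv (fun x => (u x : ℂ)) (fun x => (u1 x : ℂ)) (fun x => (h1 x).ofReal_comp)
      (by fun_prop) (by simp [p0]) n
    have e2 := co_deriv (fun x => (u1 x : ℂ)) (fun x => (u2 x : ℂ)) (fun x => (h2 x).ofReal_comp)
      (by fun_prop) (by simp [p1]) n
    have e3 : fourierCoeffOn two_pi_pos (fun x => ((u2 x + 5 / 2 * u x : ℝ) : ℂ)) n
      = fourierCoeffOn two_pi_pos (fun x => (u2 x : ℂ)) n
        + 5 / 2 * fourierCoeffOn two_pi_pos (fun x => (u x : ℂ)) n := by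
      have cf : Continuous (fun x : ℝ => (fourier (-n) (x : AddCircle (2 * π - 0)) : ℂ)) := by
        simp only [fourier_coe_apply]
        fun_prop
      simp only [fourierCoeffOn_eq_integral]
      rw [mul_smul_comm, ← intervalIntegral.integral_const_mul, ← smul_add,
        ← intervalIntegral.integral_add]
      · congr 2
        ext x
        simp only [smul_eq_mul]
        push_cast
        ring
      · exact (by simp only [smul_eq_mul]; fun_prop : Continuous _).intervalIntegrable _ _
      · exact (by simp only [smul_eq_mul]; fun_prop : Continuous _).intervalIntegrable _ _
    rw [e3, e2, e1]
    push_cast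
    linear_combination (n : ℂ) ^ 2 * fourierCoeffOn two_pi_pos (fun x => (u x : ℂ)) n *
      Complex.I_sq
  convert! hs using 1
  · ext n
    rw [hcoef, norm_mul, Complex.norm_real, mul_pow, Real.norm_eq_abs, sq_abs]
    ring
  · rw [mul_left_comm, ← mul_sub, ← intervalIntegral.integral_const_mul (9 / 4 : ℝ),
      ← intervalIntegral.integral_sub]
    · congr 2
      ext x
      ring
    · exact (by fun_prop : Continuous _).intervalIntegrable _ _
    · exact (by fun_prop : Continuous _).intervalIntegrable _ _

lemma finite_sum (u : ℝ → ℝ) (cu : Continuous u) (hper : Function.Periodic u (2 * π))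
    (h0 : ∀ n : ℤ, n ∉ Finset.Icc (-2 : ℤ) 2 →
      fourierCoeffOn two_pi_pos (fun x => (u x : ℂ)) n = 0) (x : ℝ) :
    (u x : ℂ) = ∑ n ∈ Finset.Icc (-2 : ℤ) 2,
      fourierCoeffOn two_pi_pos (fun x => (u x : ℂ)) n * Complex.exp (Complex.I * n * x) := by
  have : Fact (0 < 2 * π) := ⟨two_pi_pos⟩
  have hp : Function.Periodic (fun x => (u x : ℂ)) (2 * π) := fun x => by simp [hper x]
  have hpi : (π : ℂ) ≠ 0 := by exact_mod_cast Real.pi_ne_zero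
  let F : C(AddCircle (2 * π), ℂ) := ⟨hp.lift, by
    refine continuous_coinduced_dom.2 ?_
    show Continuous (fun x => (u x : ℂ))
    fun_prop⟩
  have hF : ∀ y : ℝ, F (y : AddCircle (2 * π)) = u y := fun y => rfl
  have hco : ∀ n, fourierCoeff F n = fourierCoeffOn two_pi_pos (fun x => (u x : ℂ)) n := by
    intro n
    rw [fourierCoeff_eq_intervalIntegral _ _ 0, fourierCoeffOn_eq_integral]
    simp only [fourier_coe_apply, hF, sub_zero, zero_add]
  have hsum : Summable (fourierCoeff F) :=
    summable_of_ne_finset_zero (s := Finset.Icc (-2 : ℤ) 2) fun n hn => by rw [hco, h0 n hn]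
  have h1 := has_pointwise_sum_fourier_series_of_summable hsum (x : AddCircle (2 * π))
  have h2 := hasSum_sum_of_ne_finset_zero (L := SummationFilter.unconditional ℤ) (s := Finset.Icc (-2 : ℤ) 2)
    (f := fun i => fourierCoeff F i • (fourier i (x : AddCircle (2 * π)) : ℂ))
    (fun n hn => by rw [hco, h0 n hn, zero_smul])
  rw [← hF, h1.unique h2]
  refine Finset.sum_congr rfl fun n _ => ?_
  rw [hco, fourier_coe_apply, smul_eq_mul]
  congr 2
  push_cast
  field_simp

lemma trig_form (u : ℝ → ℝ) (c : ℤ → ℂ)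
    (h : ∀ x : ℝ, (u x : ℂ) = ∑ n ∈ Finset.Icc (-2 : ℤ) 2, c n * Complex.exp (Complex.I * n * x)) :
    ∃ a₀ a₁ b₁ a₂ b₂ : ℝ,
        (∀ θ, u θ = a₀ + a₁ * Real.cos θ + b₁ * Real.sin θ +
          a₂ * Real.cos (2 * θ) + b₂ * Real.sin (2 * θ)) := by
  refine ⟨(c 0).re, (c 1).re + (c (-1)).re, (c (-1)).im - (c 1).im, (c 2).re + (c (-2)).re,
    (c (-2)).im - (c 2).im, fun θ => ?_⟩
  have he : ∀ n : ℤ, Complex.exp (Complex.I * n * θ)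
      = ⟨Real.cos (n * θ), Real.sin (n * θ)⟩ := by
    intro n
    have : Complex.I * n * θ = ((n * θ : ℝ) : ℂ) * Complex.I := by push_cast; ring
    rw [this, Complex.exp_mul_I, ← Complex.ofReal_cos, ← Complex.ofReal_sin]
    apply Complex.ext <;> simp [-Complex.ofReal_cos, -Complex.ofReal_sin, -Complex.ofReal_mul]
  have h1 := congrArg Complex.re (h θ)
  rw [show Finset.Icc (-2 : ℤ) 2 = {-2, -1, 0, 1, 2} by decide] at h1
  simp only [he] at h1
  rw [Complex.ofReal_re] at h1
  rw [h1]
  simp [Complex.mul_re]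
  ring

lemma trig_deriv (u : ℝ → ℝ) (a₀ a₁ b₁ a₂ b₂ : ℝ)
    (h : ∀ θ, u θ = a₀ + a₁ * Real.cos θ + b₁ * Real.sin θ +
          a₂ * Real.cos (2 * θ) + b₂ * Real.sin (2 * θ)) (θ : ℝ) :
    deriv (deriv u) θ = - a₁ * Real.cos θ - b₁ * Real.sin θ -
          4 * a₂ * Real.cos (2 * θ) - 4 * b₂ * Real.sin (2 * θ) := by
  have hs : ∀ x : ℝ, HasDerivAt (fun x => Real.sin (2 * x)) (Real.cos (2 * x) * 2) x := fun x => by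
    simpa using ((hasDerivAt_id x).const_mul 2).sin
  have hc : ∀ x : ℝ, HasDerivAt (fun x => Real.cos (2 * x)) (-Real.sin (2 * x) * 2) x := fun x => by
    simpa using ((hasDerivAt_id x).const_mul 2).cos
  have hd : deriv u = fun x => - a₁ * Real.sin x + b₁ * Real.cos x -
          2 * a₂ * Real.sin (2 * x) + 2 * b₂ * Real.cos (2 * x) := by
    ext x
    rw [funext h]
    refine HasDerivAt.deriv ?_
    convert! (((((hasDerivAt_cos x).const_mul a₁).const_add a₀).add
      ((hasDerivAt_sin x).const_mul b₁)).add ((hc x).const_mul a₂)).add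
      ((hs x).const_mul b₂) using 1
    ring
  rw [hd]
  refine HasDerivAt.deriv ?_
  convert! ((((hasDerivAt_sin θ).const_mul (-a₁)).add
      ((hasDerivAt_cos θ).const_mul b₁)).sub ((hs θ).const_mul (2 * a₂))).add
      ((hc θ).const_mul (2 * b₂)) using 1
  ring

lemma trig_int1 (a₀ a₁ b₁ a₂ b₂ : ℝ) :
    ∫ θ in (0:ℝ)..(2 * π), (a₀ + a₁ * Real.cos θ + b₁ * Real.sin θ +
          a₂ * Real.cos (2 * θ) + b₂ * Real.sin (2 * θ)) = 2 * π * a₀ := by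
  have hs : ∀ x : ℝ, HasDerivAt (fun x => Real.sin (2 * x)) (Real.cos (2 * x) * 2) x := fun x => by
    simpa using ((hasDerivAt_id x).const_mul 2).sin
  have hc : ∀ x : ℝ, HasDerivAt (fun x => Real.cos (2 * x)) (-Real.sin (2 * x) * 2) x := fun x => by
    simpa using ((hasDerivAt_id x).const_mul 2).cos
  have hd : ∀ x ∈ uIcc 0 (2 * π), HasDerivAt (fun x => a₀ * x + a₁ * Real.sin x - b₁ * Real.cos x
      + a₂ / 2 * Real.sin (2 * x) - b₂ / 2 * Real.cos (2 * x))
      (a₀ + a₁ * Real.cos x + b₁ * Real.sin x +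
          a₂ * Real.cos (2 * x) + b₂ * Real.sin (2 * x)) x := by
    intro x _
    convert! ((((((hasDerivAt_id x).const_mul a₀)).add ((hasDerivAt_sin x).const_mul a₁)).sub
      ((hasDerivAt_cos x).const_mul b₁)).add ((hs x).const_mul (a₂ / 2))).sub
      ((hc x).const_mul (b₂ / 2)) using 1
    ring
  rw [integral_eq_sub_of_hasDerivAt hd ((by fun_prop : Continuous _).intervalIntegrable _ _)]
  have e1 : Real.cos (2 * (2 * π)) = 1 := by rw [Real.cos_two_mul]; simp; norm_num
  have e2 : Real.sin (2 * (2 * π)) = 0 := by rw [Real.sin_two_mul]; simp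
  simp [e1, e2]
  ring

lemma trig_int2 (a₀ a₁ b₁ a₂ b₂ : ℝ) :
    ∫ θ in (0:ℝ)..(2 * π), (a₀ - 3 * a₂ * Real.cos (2 * θ) - 3 * b₂ * Real.sin (2 * θ)) *
      (4 * a₀ + 3 * a₁ * Real.cos θ + 3 * b₁ * Real.sin θ) = 8 * π * a₀ ^ 2 := by
  have hs : ∀ x : ℝ, HasDerivAt (fun x => Real.sin (2 * x)) (Real.cos (2 * x) * 2) x := fun x => by
    simpa using ((hasDerivAt_id x).const_mul 2).sin
  have hc : ∀ x : ℝ, HasDerivAt (fun x => Real.cos (2 * x)) (-Real.sin (2 * x) * 2) x := fun x => by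
    simpa using ((hasDerivAt_id x).const_mul 2).cos
  have hz : ∀ x : ℝ, HasDerivAt (fun x => a₁ * Real.cos x + b₁ * Real.sin x)
      (a₁ * -Real.sin x + b₁ * Real.cos x) x := fun x =>
    ((hasDerivAt_cos x).const_mul a₁).add ((hasDerivAt_sin x).const_mul b₁)
  have hz' : ∀ x : ℝ, HasDerivAt (fun x => a₁ * Real.sin x - b₁ * Real.cos x)
      (a₁ * Real.cos x - b₁ * -Real.sin x) x := fun x =>
    ((hasDerivAt_sin x).const_mul a₁).sub ((hasDerivAt_cos x).const_mul b₁)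
  have hw : ∀ x : ℝ, HasDerivAt (fun x => a₂ * Real.cos (2 * x) + b₂ * Real.sin (2 * x))
      (a₂ * (-Real.sin (2 * x) * 2) + b₂ * (Real.cos (2 * x) * 2)) x := fun x =>
    ((hc x).const_mul a₂).add ((hs x).const_mul b₂)
  have hw' : ∀ x : ℝ, HasDerivAt (fun x => a₂ * Real.sin (2 * x) - b₂ * Real.cos (2 * x))
      (a₂ * (Real.cos (2 * x) * 2) - b₂ * (-Real.sin (2 * x) * 2)) x := fun x =>
    ((hs x).const_mul a₂).sub ((hc x).const_mul b₂)
  have hd : ∀ x ∈ uIcc 0 (2 * π), HasDerivAt (fun x => 4 * a₀ ^ 2 * x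
      + 3 * a₀ * (a₁ * Real.sin x - b₁ * Real.cos x)
      - 6 * a₀ * (a₂ * Real.sin (2 * x) - b₂ * Real.cos (2 * x))
      + (-6) * ((a₁ * Real.cos x + b₁ * Real.sin x) *
          (a₂ * Real.sin (2 * x) - b₂ * Real.cos (2 * x)))
      + 3 * ((a₁ * Real.sin x - b₁ * Real.cos x) *
          (a₂ * Real.cos (2 * x) + b₂ * Real.sin (2 * x))))
      ((a₀ - 3 * a₂ * Real.cos (2 * x) - 3 * b₂ * Real.sin (2 * x)) *
      (4 * a₀ + 3 * a₁ * Real.cos x + 3 * b₁ * Real.sin x)) x := by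
    intro x _
    convert! (((((hasDerivAt_id x).const_mul (4 * a₀ ^ 2)).add ((hz' x).const_mul (3 * a₀))).sub
      ((hw' x).const_mul (6 * a₀))).add (((hz x).mul (hw' x)).const_mul (-6))).add
      (((hz' x).mul (hw x)).const_mul 3) using 1
    ring
  rw [integral_eq_sub_of_hasDerivAt hd ((by fun_prop : Continuous _).intervalIntegrable _ _)]
  have e1 : Real.cos (2 * (2 * π)) = 1 := by rw [Real.cos_two_mul]; simp; norm_num
  have e2 : Real.sin (2 * (2 * π)) = 0 := by rw [Real.sin_two_mul]; simp
  simp [e1, e2]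
  ring


/-- Equality in the refined Green–Osher inequality holds iff the support
function is a trigonometric polynomial of degree `≤ 2`,
`u(θ) = a₀ + a₁ cos θ + b₁ sin θ + a₂ cos 2θ + b₂ sin 2θ`, with
`a₀ − 3a₂ cos 2θ − 3b₂ sin 2θ > 0` for all `θ`. -/
theorem stmt_11 (u : ℝ → ℝ) (hu : ContDiff ℝ (⊤ : ℕ∞) u)
    (hper : Function.Periodic u (2 * π))
    (hconv : ∀ θ, 0 < deriv (deriv u) θ + u θ)
    (L A : ℝ)
    (hL : L = ∫ θ in (0:ℝ)..(2 * π), u θ)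
    (hA : A = (1 / 2) * ∫ θ in (0:ℝ)..(2 * π), u θ * (deriv (deriv u) θ + u θ)) :
    (∫ θ in (0:ℝ)..(2 * π), (deriv (deriv u) θ + u θ) ^ 2)
        = (2 / π) * (L ^ 2 - 4 * π * A) + 2 * A ↔
      ∃ a₀ a₁ b₁ a₂ b₂ : ℝ,
        (∀ θ, u θ = a₀ + a₁ * Real.cos θ + b₁ * Real.sin θ +
          a₂ * Real.cos (2 * θ) + b₂ * Real.sin (2 * θ)) ∧
        (∀ θ, 0 < a₀ - 3 * a₂ * Real.cos (2 * θ) - 3 * b₂ * Real.sin (2 * θ)) := by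
  have d1 : Differentiable ℝ u := hu.differentiable (by simp)
  have hu1 : ContDiff ℝ (⊤ : ℕ∞) (deriv u) := by
    have := (contDiff_infty_iff_deriv.1 hu).2
    exact this
  have hu2 : ContDiff ℝ (⊤ : ℕ∞) (deriv (deriv u)) := (contDiff_infty_iff_deriv.1 hu1).2
  have d2 : Differentiable ℝ (deriv u) := hu1.differentiable (by simp)
  have cu := hu.continuous
  have c2 := hu2.continuous
  have hpi := Real.pi_pos
  -- the equality is equivalent to the vanishing of the deficit
  have hI : (∫ θ in (0:ℝ)..(2 * π), (deriv (deriv u) θ + u θ) * (deriv (deriv u) θ + 4 * u θ))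
      = (∫ θ in (0:ℝ)..(2 * π), (deriv (deriv u) θ + u θ) ^ 2) + 6 * A := by
    rw [hA, ← mul_assoc, ← intervalIntegral.integral_const_mul, ← intervalIntegral.integral_add]
    · congr 1
      ext x
      ring
    · exact (by fun_prop : Continuous _).intervalIntegrable _ _
    · exact (by fun_prop : Continuous _).intervalIntegrable _ _
  have hrhs : (2 / π) * (L ^ 2 - 4 * π * A) + 2 * A = 2 / π * L ^ 2 - 6 * A := by
    field_simp
    ring
  rw [hrhs]
  constructor
  · intro heq
    have hI' : (∫ θ in (0:ℝ)..(2 * π), (deriv (deriv u) θ + u θ) * (deriv (deriv u) θ + 4 * u θ))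
      = 2 / π * L ^ 2 := by rw [hI, heq]; ring
    have hp1 : deriv u (2 * π) = deriv u 0 := by
      have h := deriv_comp_add_const (f := u) (2 * π) 0
      rw [show (fun x => u (x + 2 * π)) = u from funext hper] at h
      rw [h, zero_add]
    have hs := key_sum u (deriv u) (deriv (deriv u)) (fun x => (d1 x).hasDerivAt)
      (fun x => (d2 x).hasDerivAt) c2 (by simpa using hper 0) hp1
    have hc0 : ‖fourierCoeffOn two_pi_pos (fun x => (u x : ℂ)) 0‖ ^ 2 = (L / (2 * π)) ^ 2 := by
      rw [fourierCoeffOn_eq_integral]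
      simp only [neg_zero, fourier_zero, one_smul, sub_zero]
      rw [intervalIntegral.integral_ofReal, ← hL, norm_smul, Complex.norm_real, mul_pow]
      simp only [Real.norm_eq_abs, sq_abs]
      ring
    rw [hI'] at hs
    have hs' := hs.update 0 0
    have hz : (0 - (((0 : ℤ) : ℝ) ^ 2 - 1) * (((0 : ℤ) : ℝ) ^ 2 - 4) *
        ‖fourierCoeffOn two_pi_pos (fun x => (u x : ℂ)) 0‖ ^ 2 + (2 * π)⁻¹ * (2 / π * L ^ 2)) = 0 := by
      rw [hc0]
      field_simp
      norm_num
      ring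
    rw [hz] at hs'
    have hnn : ∀ n : ℤ, 0 ≤ Function.update (fun n : ℤ => (((n : ℝ) ^ 2 - 1) * ((n : ℝ) ^ 2 - 4)) *
        ‖fourierCoeffOn two_pi_pos (fun x => (u x : ℂ)) n‖ ^ 2) 0 0 n := by
      intro n
      by_cases hn : n = 0
      · simp [hn]
      · rw [Function.update_of_ne hn]
        refine mul_nonneg ?_ (sq_nonneg _)
        have h1 : (0 : ℤ) ≤ (n ^ 2 - 1) * (n ^ 2 - 4) := by
          by_cases hb : n.natAbs ≤ 2
          · have : -2 ≤ n ∧ n ≤ 2 := by omega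
            obtain ⟨ha, hb⟩ := this
            interval_cases n <;> simp_all
          · have : 9 ≤ n ^ 2 := by
              have : 3 ≤ |n| := by rw [le_abs]; omega
              rw [← sq_abs]; nlinarith
            nlinarith
        exact_mod_cast h1
    have hall := (hasSum_zero_iff_of_nonneg hnn).1 hs'
    obtain ⟨a₀, a₁, b₁, a₂, b₂, hform⟩ := trig_form u _ (finite_sum u cu hper (by
      intro n hn
      have h1 := congrFun hall n
      have h3 : 3 ≤ |n| := by
        rw [Finset.mem_Icc] at hn
        rw [le_abs]
        omega
      have hn0 : n ≠ 0 := by rintro rfl; simp at h3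
      rw [Function.update_of_ne hn0] at h1
      have h9 : (9 : ℝ) ≤ (n : ℝ) ^ 2 := by
        have : 9 ≤ n ^ 2 := by rw [← sq_abs]; nlinarith
        exact_mod_cast this
      have hpos : 0 < ((n : ℝ) ^ 2 - 1) * ((n : ℝ) ^ 2 - 4) := by nlinarith
      rcases mul_eq_zero.1 h1 with h | h
      · exact absurd h hpos.ne'
      · simpa using h))
    refine ⟨a₀, a₁, b₁, a₂, b₂, hform, fun θ => ?_⟩
    have := hconv θ
    rw [trig_deriv u _ _ _ _ _ hform, hform] at this
    linarith
  · rintro ⟨a₀, a₁, b₁, a₂, b₂, hform, -⟩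
    have hL' : L = 2 * π * a₀ := by
      rw [hL, ← trig_int1 a₀ a₁ b₁ a₂ b₂]
      exact intervalIntegral.integral_congr fun θ _ => hform θ
    have hJ : (∫ θ in (0:ℝ)..(2 * π), (deriv (deriv u) θ + u θ) * (deriv (deriv u) θ + 4 * u θ))
        = 8 * π * a₀ ^ 2 := by
      rw [← trig_int2 a₀ a₁ b₁ a₂ b₂]
      refine intervalIntegral.integral_congr fun θ _ => ?_
      simp only [trig_deriv u _ _ _ _ _ hform, hform]
      ring
    have hL2 : 2 / π * L ^ 2 = 8 * π * a₀ ^ 2 := by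
      rw [hL']
      field_simp
      ring
    linarith
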